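/- Let A be an n-by-n reciprocal matrix. Then every column of A is efficient for A; that is, for each j ∈ {1, …, n}, the vector a_j with i-th entry a_ij is efficient for A. -/

import Mathlib

/-- An n-by-n positive matrix is reciprocal if `A j i = 1 / A i j` for all `i, j`. -/
def Reciprocal {n : ℕ} (A : Matrix (Fin n) (Fin n) ℝ) : Prop :=
  (∀ i j, 0 < A i j) ∧ ∀ i j, A j i = 1 / A i j

/-- A positive vector `w` is efficient for a reciprocal matrix `A` if every positive
vector `v` with `|v i / v j - A i j| ≤ |w i / w j - A i j|` entrywise is a positive
scalar multiple of `w`. -/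
def Efficient {n : ℕ} (A : Matrix (Fin n) (Fin n) ℝ) (w : Fin n → ℝ) : Prop :=
  ∀ v : Fin n → ℝ, (∀ i, 0 < v i) →
    (∀ i j, |v i / v j - A i j| ≤ |w i / w j - A i j|) →
    ∃ c : ℝ, 0 < c ∧ v = fun i => c * w i

theorem Reciprocal.diag_eq_one {n : ℕ} {A : Matrix (Fin n) (Fin n) ℝ} (hA : Reciprocal A)
    (i : Fin n) : A i i = 1 := by
  have hpos : 0 < A i i := hA.1 i i
  have hsq : A i i ^ 2 = 1 := by
    rw [sq]
    exact (eq_div_iff hpos.ne').mp (hA.2 i i)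
  exact (pow_eq_one_iff_of_nonneg hpos.le two_ne_zero).mp hsq

theorem Efficient.of_div_eq {n : ℕ} {A : Matrix (Fin n) (Fin n) ℝ} {w : Fin n → ℝ} {j : Fin n}
    (hwj : 0 < w j) (hw : ∀ i, w i / w j = A i j) : Efficient A w := by
  intro v hv hvw
  -- The error of `w` vanishes on column `j`, which fixes every ratio to the `j`-th coordinate.
  have hratio (i : Fin n) : v i / v j = w i / w j := by
    have herror : |v i / v j - A i j| ≤ 0 := by simpa only [hw, sub_self, abs_zero] using hvw i j
    rw [hw, ← sub_eq_zero, ← abs_nonpos_iff]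
    exact herror
  refine ⟨v j / w j, div_pos (hv j) hwj, funext fun i => ?_⟩
  calc
    v i = v i / v j * v j := (div_mul_cancel₀ (v i) (hv j).ne').symm
    _ = w i / w j * v j := by rw [hratio]
    _ = v j / w j * w i := by ring

theorem stmt_7_general {n : ℕ} {A : Matrix (Fin n) (Fin n) ℝ} {j : Fin n} (hj : A j j = 1) :
    Efficient A (fun i => A i j) :=
  Efficient.of_div_eq (j := j) (by rw [hj]; exact one_pos) fun i => by rw [hj, div_one]

/-- Every column of a reciprocal matrix is efficient for it. -/
theorem stmt_7 {n : ℕ} (A : Matrix (Fin n) (Fin n) ℝ) (hA : Reciprocal A)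
    (j : Fin n) : Efficient A (fun i => A i j) :=
  stmt_7_general (hA.diag_eq_one j)
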